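/- If a 4-form σ on ℝ^8 satisfies σ_{jabc}Φ_{iabc} = 0 for all i,j (sum over a,b,c), then σ is self-dual: σ_{ijkl} = (1/24) ε_{ijklabcd} σ_{abcd} for all i,j,k,l. -/

import Mathlib

/-!
We work in ℝ⁸ with the standard basis `e₀, …, e₇`.  A `k`-form is a totally antisymmetric
map `(Fin 8)^k → ℝ`; repeated indices are summed over `Fin 8` and `kd` is the Kronecker
delta.  `Phi` is the fundamental 4-form of the standard `Spin(7)`-structure on ℝ⁸,
`Φ = -e₀₁₂₇ + e₀₂₃₆ - e₀₃₄₇ - e₀₅₆₇ + e₀₁₄₆ + e₀₂₄₅ - e₀₁₃₅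
     - e₃₄₅₆ - e₁₄₅₇ - e₁₂₅₆ - e₁₂₃₄ - e₂₃₅₇ - e₁₃₆₇ + e₂₄₆₇`.
-/

noncomputable section

/-- Kronecker delta on `Fin 8`. -/
def kd (a b : Fin 8) : ℝ := if a = b then 1 else 0

/-- Component at the indices `(i,j,k,l)` of the wedge product `e_a ∧ e_b ∧ e_c ∧ e_d`
of standard coordinate 1-forms, normalized so that `(e_a ∧ e_b ∧ e_c ∧ e_d)_{abcd} = 1`;
it is the alternating sum of products of Kronecker deltas. -/
def wedge4 (a b c d i j k l : Fin 8) : ℝ :=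
  Matrix.det !![kd a i, kd a j, kd a k, kd a l;
                kd b i, kd b j, kd b k, kd b l;
                kd c i, kd c j, kd c k, kd c l;
                kd d i, kd d j, kd d k, kd d l]

/-- The fundamental 4-form `Φ` of the standard `Spin(7)`-structure on `ℝ⁸`, in components:
the totally antisymmetric 4-tensor with `Φ_{0127} = -1`, `Φ_{0236} = 1`, `Φ_{0347} = -1`,
`Φ_{0567} = -1`, `Φ_{0146} = 1`, `Φ_{0245} = 1`, `Φ_{0135} = -1`, `Φ_{3456} = -1`,
`Φ_{1457} = -1`, `Φ_{1256} = -1`, `Φ_{1234} = -1`, `Φ_{2357} = -1`, `Φ_{1367} = -1`,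
`Φ_{2467} = 1`, all components not obtained from these by permutation being zero. -/
def Phi (i j k l : Fin 8) : ℝ :=
    -wedge4 0 1 2 7 i j k l + wedge4 0 2 3 6 i j k l - wedge4 0 3 4 7 i j k l
  - wedge4 0 5 6 7 i j k l + wedge4 0 1 4 6 i j k l + wedge4 0 2 4 5 i j k l
  - wedge4 0 1 3 5 i j k l - wedge4 3 4 5 6 i j k l - wedge4 1 4 5 7 i j k l
  - wedge4 1 2 5 6 i j k l - wedge4 1 2 3 4 i j k l - wedge4 2 3 5 7 i j k l
  - wedge4 1 3 6 7 i j k l + wedge4 2 4 6 7 i j k l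

/-- The Levi-Civita symbol on eight indices: `eps8 f` is the sign of
`(f 0, …, f 7)` as a permutation of `(0, …, 7)`, and `0` if an index repeats. -/
def eps8 (f : Fin 8 → Fin 8) : ℝ :=
  if h : Function.Bijective f then ((Equiv.Perm.sign (Equiv.ofBijective f h) : ℤ) : ℝ) else 0

/-!
Let `P_{ijkl} = Φ_{ijab} σ_{abkl}`. The contraction identity
`Φ_{pijk} Φ_{pabc} = δ^{ijk}_{abc} - (δ_{ia} Φ_{jkbc} + cyclic permutations of ijk and of abc)`
turns the trace condition into `2 σ_{ijkl} = P_{klij} + P_{ljik} + P_{jkil}`, so the signed sum of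
`P` over all orderings of `ijkl` is `16 σ_{ijkl}`. That signed sum is self-dual because `Φ` is: when
the basis vectors are split into two blocks `x` and `y` of four, self-duality turns
`Φ(x_{ρ0}, x_{ρ1}, y_{τ0}, y_{τ1})` into `± Φ(x_{ρ2}, x_{ρ3}, y_{τ2}, y_{τ3})`, which exchanges the
roles of the two blocks.
-/

section AlternatingTensor

variable {ι M : Type*} {n : ℕ} [AddCommGroup M]

/-- Totally antisymmetric arrays of components, i.e. the components of an `n`-form, indexed by
tuples. -/
def IsAlternatingTensor (F : (Fin n → ι) → M) : Prop :=
  ∀ (v : Fin n → ι) (τ : Equiv.Perm (Fin n)), F (v ∘ τ) = Equiv.Perm.sign τ • F v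

lemma isAlternatingTensor_of_adjacent_swaps {F : (Fin (n + 1) → ι) → M}
    (hF : ∀ v (a : Fin n), F (v ∘ Equiv.swap a.castSucc a.succ) = -F v) :
    IsAlternatingTensor F := by
  intro v τ
  have hτ : τ ∈ Submonoid.closure (Set.range fun a : Fin n ↦ Equiv.swap a.castSucc a.succ) := by
    simp [Equiv.Perm.mclosure_swap_castSucc_succ]
  induction hτ using Submonoid.closure_induction_right generalizing v with
  | one => simp
  | mul_right ρ _ _ hs ih =>
    obtain ⟨a, rfl⟩ := hs
    rw [Equiv.Perm.coe_mul, ← Function.comp_assoc, hF, ih, Equiv.Perm.sign_mul,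
      Equiv.Perm.sign_swap a.castSucc_lt_succ.ne, mul_neg_one, Units.neg_smul]

namespace IsAlternatingTensor

variable [IsAddTorsionFree M] {F G : (Fin n → ι) → M}

lemma eq_zero_of_not_injective (hF : IsAlternatingTensor F) {v : Fin n → ι}
    (hv : ¬ Function.Injective v) : F v = 0 := by
  obtain ⟨a, b, hab, hne⟩ := Function.not_injective_iff.mp hv
  have hswap : v ∘ Equiv.swap a b = v := by
    rw [Equiv.comp_swap_eq_update, hab, Function.update_eq_self, ← hab, Function.update_eq_self]
  have hneg := hF v (Equiv.swap a b)
  rw [hswap, Equiv.Perm.sign_swap hne, Units.neg_smul, one_smul] at hneg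
  exact self_eq_neg.mp hneg

lemma eq_of_forall_strictMono [LinearOrder ι] (hF : IsAlternatingTensor F)
    (hG : IsAlternatingTensor G) (hFG : ∀ v, StrictMono v → F v = G v) : F = G := by
  funext v
  by_cases hv : Function.Injective v
  · have hsort : F (v ∘ Tuple.sort v) = G (v ∘ Tuple.sort v) :=
      hFG _ ((Tuple.monotone_sort v).strictMono_of_injective (hv.comp (Tuple.sort v).injective))
    rw [hF, hG] at hsort
    exact smul_left_cancel _ hsort
  · rw [hF.eq_zero_of_not_injective hv, hG.eq_zero_of_not_injective hv]

end IsAlternatingTensor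

end AlternatingTensor

section FourForm

variable {ι R : Type*} [CommRing R]

/-- The components `σ_{ijkl}` of a 4-form; the totally antisymmetric arrays in curried form. -/
def IsFourForm (σ : ι → ι → ι → ι → R) : Prop :=
  IsAlternatingTensor fun v : Fin 4 → ι ↦ σ (v 0) (v 1) (v 2) (v 3)

lemma isFourForm_of_adjacent_swaps {σ : ι → ι → ι → ι → R}
    (hσ : ∀ i j k l, σ i j k l = -σ j i k l ∧ σ i j k l = -σ i k j l ∧ σ i j k l = -σ i j l k) :
    IsFourForm σ := by
  refine isAlternatingTensor_of_adjacent_swaps fun v a ↦ ?_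
  obtain ⟨h₀₁, h₁₂, h₂₃⟩ := hσ (v 0) (v 1) (v 2) (v 3)
  fin_cases a
  · simpa [Equiv.swap_apply_def] using (neg_eq_iff_eq_neg.mpr h₀₁).symm
  · simpa [Equiv.swap_apply_def] using (neg_eq_iff_eq_neg.mpr h₁₂).symm
  · simpa [Equiv.swap_apply_def] using (neg_eq_iff_eq_neg.mpr h₂₃).symm

namespace IsFourForm

variable {σ : ι → ι → ι → ι → R}

lemma apply_perm (hσ : IsFourForm σ) (v : Fin 4 → ι) (τ : Equiv.Perm (Fin 4)) :
    σ (v (τ 0)) (v (τ 1)) (v (τ 2)) (v (τ 3)) =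
      ((Equiv.Perm.sign τ : ℤ) : R) * σ (v 0) (v 1) (v 2) (v 3) := by
  rw [← zsmul_eq_mul]
  exact hσ v τ

lemma swap₀₁ (hσ : IsFourForm σ) (i j k l : ι) : σ j i k l = -σ i j k l := by
  simpa [Equiv.swap_apply_def] using hσ.apply_perm ![i, j, k, l] (Equiv.swap 0 1)

lemma swap₁₂ (hσ : IsFourForm σ) (i j k l : ι) : σ i k j l = -σ i j k l := by
  simpa [Equiv.swap_apply_def] using hσ.apply_perm ![i, j, k, l] (Equiv.swap 1 2)

lemma swap₂₃ (hσ : IsFourForm σ) (i j k l : ι) : σ i j l k = -σ i j k l := by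
  simpa [Equiv.swap_apply_def] using hσ.apply_perm ![i, j, k, l] (Equiv.swap 2 3)

lemma swap_pairs (hσ : IsFourForm σ) (i j k l : ι) : σ k l i j = σ i j k l := by
  rw [hσ.swap₁₂ k i l j, hσ.swap₀₁ i k l j, hσ.swap₂₃ i k j l, hσ.swap₁₂ i j k l]
  simp only [neg_neg]

lemma isAlternatingTensor_apply (hσ : IsFourForm σ) (i : ι) :
    IsAlternatingTensor fun v : Fin 3 → ι ↦ σ i (v 0) (v 1) (v 2) := by
  refine isAlternatingTensor_of_adjacent_swaps fun v a ↦ ?_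
  have h₁₂ := hσ.swap₁₂ i (v 0) (v 1) (v 2)
  have h₂₃ := hσ.swap₂₃ i (v 0) (v 1) (v 2)
  fin_cases a
  · simpa [Equiv.swap_apply_def] using h₁₂
  · simpa [Equiv.swap_apply_def] using h₂₃

lemma eq_zero_of_not_injective [IsAddTorsionFree R] (hσ : IsFourForm σ) {i j k l : ι}
    (h : ¬ Function.Injective ![i, j, k, l]) : σ i j k l = 0 :=
  IsAlternatingTensor.eq_zero_of_not_injective hσ h

lemma intCast {σ : ι → ι → ι → ι → ℤ} (hσ : IsFourForm σ) :
    IsFourForm fun i j k l ↦ (σ i j k l : R) := fun v τ ↦ by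
  simpa [Units.smul_def] using congrArg (Int.cast : ℤ → R) (hσ.apply_perm v τ)

end IsFourForm

end FourForm

section Antisymmetrization

open scoped Finset

/-- The signed sum of a 4-tensor over all orderings of its arguments, without normalization. -/
def antisymmetrize {ι R : Type*} [Ring R] (T : ι → ι → ι → ι → R) (x : Fin 4 → ι) : R :=
  ∑ ρ : Equiv.Perm (Fin 4),
    ((Equiv.Perm.sign ρ : ℤ) : R) * T (x (ρ 0)) (x (ρ 1)) (x (ρ 2)) (x (ρ 3))

lemma sum_perm_fin_four_eq_two_nsmul {M : Type*} [AddCommMonoid M] (S : Fin 4 → Fin 4 → M)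
    (hS : ∀ a, S a a = 0) :
    ∑ τ : Equiv.Perm (Fin 4), S (τ 0) (τ 1) = 2 • ∑ a, ∑ b, S a b := by
  have hcard : ∀ a b : Fin 4,
      a ≠ b → #{τ : Equiv.Perm (Fin 4) | τ 0 = a ∧ τ 1 = b} = 2 := by
    decide
  simp only [Finset.smul_sum]
  calc ∑ τ : Equiv.Perm (Fin 4), S (τ 0) (τ 1)
      = ∑ τ : Equiv.Perm (Fin 4), ∑ a, ∑ b, if τ 0 = a ∧ τ 1 = b then S a b else 0 := by
        simp [ite_and]
    _ = ∑ a, ∑ b, #{τ : Equiv.Perm (Fin 4) | τ 0 = a ∧ τ 1 = b} • S a b := by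
        rw [Finset.sum_comm]
        refine Finset.sum_congr rfl fun a _ ↦ ?_
        rw [Finset.sum_comm]
        simp [← Finset.sum_filter]
    _ = ∑ a, ∑ b, 2 • S a b := by
        refine Finset.sum_congr rfl fun a _ ↦ Finset.sum_congr rfl fun b _ ↦ ?_
        by_cases hab : a = b
        · simp [hab, hS]
        · rw [hcard a b hab]

variable {ι R : Type*} [CommRing R]

lemma antisymmetrize_comp_perm (T : ι → ι → ι → ι → R) (x : Fin 4 → ι)
    (π : Equiv.Perm (Fin 4)) :
    ∑ ρ : Equiv.Perm (Fin 4), ((Equiv.Perm.sign ρ : ℤ) : R) *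
        T (x (ρ (π 0))) (x (ρ (π 1))) (x (ρ (π 2))) (x (ρ (π 3))) =
      ((Equiv.Perm.sign π : ℤ) : R) * antisymmetrize T x := by
  rw [antisymmetrize, Finset.mul_sum]
  refine Fintype.sum_equiv (Equiv.mulRight π) _ _ fun ρ ↦ ?_
  rcases Int.units_eq_one_or (Equiv.Perm.sign π) with hπ | hπ <;> simp [hπ]

lemma antisymmetrize_eq_three_mul {S T : ι → ι → ι → ι → R}
    (h : ∀ i j k l, S i j k l = T k l i j + T l j i k + T j k i l) (x : Fin 4 → ι) :
    antisymmetrize S x = 3 * antisymmetrize T x := by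
  have h₁ : ∑ ρ : Equiv.Perm (Fin 4), ((Equiv.Perm.sign ρ : ℤ) : R) *
      T (x (ρ 2)) (x (ρ 3)) (x (ρ 0)) (x (ρ 1)) = antisymmetrize T x := by
    simpa [Equiv.swap_apply_def] using
      (antisymmetrize_comp_perm T x (Equiv.swap 0 2 * Equiv.swap 1 3) :)
  have h₂ : ∑ ρ : Equiv.Perm (Fin 4), ((Equiv.Perm.sign ρ : ℤ) : R) *
      T (x (ρ 3)) (x (ρ 1)) (x (ρ 0)) (x (ρ 2)) = antisymmetrize T x := by
    simpa [Equiv.swap_apply_def] using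
      (antisymmetrize_comp_perm T x (Equiv.swap 0 2 * Equiv.swap 0 3) :)
  have h₃ : ∑ ρ : Equiv.Perm (Fin 4), ((Equiv.Perm.sign ρ : ℤ) : R) *
      T (x (ρ 1)) (x (ρ 2)) (x (ρ 0)) (x (ρ 3)) = antisymmetrize T x := by
    simpa [Equiv.swap_apply_def] using
      (antisymmetrize_comp_perm T x (Equiv.swap 0 2 * Equiv.swap 0 1) :)
  rw [antisymmetrize]
  simp only [h, mul_add, Finset.sum_add_distrib, h₁, h₂, h₃]
  ring

lemma IsFourForm.antisymmetrize_eq {σ : ι → ι → ι → ι → R} (hσ : IsFourForm σ)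
    (x : Fin 4 → ι) : antisymmetrize σ x = 24 * σ (x 0) (x 1) (x 2) (x 3) := by
  have hterm (ρ : Equiv.Perm (Fin 4)) : ((Equiv.Perm.sign ρ : ℤ) : R) *
      σ (x (ρ 0)) (x (ρ 1)) (x (ρ 2)) (x (ρ 3)) = σ (x 0) (x 1) (x 2) (x 3) := by
    rw [hσ.apply_perm, ← mul_assoc, ← Int.cast_mul, Int.units_coe_mul_self, Int.cast_one, one_mul]
  simp [antisymmetrize, hterm, Fintype.card_perm, Nat.factorial]

end Antisymmetrization

section DoubleContraction

/-- The partial contraction `φ_{ijab} σ_{abkl}` of two 4-tensors. -/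
def doubleContraction {ι R : Type*} [Fintype ι] [Ring R] (φ σ : ι → ι → ι → ι → R)
    (i j k l : ι) : R :=
  ∑ a, ∑ b, φ i j a b * σ a b k l

variable {ι R : Type*} [CommRing R] {φ σ : ι → ι → ι → ι → R}

lemma IsFourForm.mul_contracted_comm (hφ : IsFourForm φ) (hσ : IsFourForm σ) (i j k l a b : ι) :
    φ i j b a * σ b a k l = φ i j a b * σ a b k l := by
  rw [hφ.swap₂₃, hσ.swap₀₁, neg_mul_neg]

lemma IsFourForm.mul_contracted_eq_zero [IsAddTorsionFree R] (hφ : IsFourForm φ)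
    (hσ : IsFourForm σ) {i j k l a b : ι} (h : a = i ∨ a = j ∨ a = k ∨ a = l ∨ a = b) :
    φ i j a b * σ a b k l = 0 := by
  rcases h with rfl | rfl | rfl | rfl | rfl
  · refine mul_eq_zero_of_left (hφ.eq_zero_of_not_injective fun h ↦ ?_) _
    exact absurd (@h 0 2 rfl) (by decide)
  · refine mul_eq_zero_of_left (hφ.eq_zero_of_not_injective fun h ↦ ?_) _
    exact absurd (@h 1 2 rfl) (by decide)
  · refine mul_eq_zero_of_right _ (hσ.eq_zero_of_not_injective fun h ↦ ?_)
    exact absurd (@h 0 2 rfl) (by decide)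
  · refine mul_eq_zero_of_right _ (hσ.eq_zero_of_not_injective fun h ↦ ?_)
    exact absurd (@h 0 3 rfl) (by decide)
  · refine mul_eq_zero_of_left (hφ.eq_zero_of_not_injective fun h ↦ ?_) _
    exact absurd (@h 2 3 rfl) (by decide)

end DoubleContraction

section SelfDuality

variable {R : Type*} [CommRing R]

/-- The orientation sign of the standard basis of an 8-dimensional space relabeled by `f`, with the
block `Sum.inl` listed first. The two blocks of labels hold a 4-element set of indices and its
complement. -/
def frameSign (f : Fin 4 ⊕ Fin 4 ≃ Fin 8) : ℤˣ :=
  Equiv.Perm.sign (finSumFinEquiv.symm.trans f)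

/-- `σ = ⋆σ`, tested on all relabelings of the standard oriented basis of an 8-dimensional space:
the Hodge star turns the component on the last four vectors of an oriented orthonormal basis into
the component on the first four. -/
def IsSelfDual (σ : Fin 8 → Fin 8 → Fin 8 → Fin 8 → R) : Prop :=
  ∀ f : Fin 4 ⊕ Fin 4 ≃ Fin 8, σ (f (.inl 0)) (f (.inl 1)) (f (.inl 2)) (f (.inl 3)) =
    ((frameSign f : ℤ) : R) * σ (f (.inr 0)) (f (.inr 1)) (f (.inr 2)) (f (.inr 3))

lemma frameSign_trans (τ : Equiv.Perm (Fin 4 ⊕ Fin 4)) (f : Fin 4 ⊕ Fin 4 ≃ Fin 8) :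
    frameSign (τ.trans f) = Equiv.Perm.sign τ * frameSign f := by
  have hsplit : finSumFinEquiv.symm.trans (τ.trans f) =
      (finSumFinEquiv.symm.trans f) * (finSumFinEquiv.permCongr τ) := by
    ext; simp [Equiv.permCongr_apply]
  rw [frameSign, hsplit, Equiv.Perm.sign_mul, Equiv.Perm.sign_permCongr, mul_comm, frameSign]

variable {φ σ : Fin 8 → Fin 8 → Fin 8 → Fin 8 → R}

lemma IsSelfDual.apply_swap (hφ : IsSelfDual φ) (f : Fin 4 ⊕ Fin 4 ≃ Fin 8)
    (ρ τ : Equiv.Perm (Fin 4)) :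
    ((Equiv.Perm.sign ρ : ℤ) : R) *
        φ (f (.inl (ρ 0))) (f (.inl (ρ 1))) (f (.inr (τ 0))) (f (.inr (τ 1))) =
      ((frameSign f : ℤ) : R) * (((Equiv.Perm.sign τ : ℤ) : R) *
        φ (f (.inl (ρ 2))) (f (.inl (ρ 3))) (f (.inr (τ 2))) (f (.inr (τ 3)))) := by
  let exchange : Equiv.Perm (Fin 4 ⊕ Fin 4) :=
    Equiv.swap (Sum.inl 2) (Sum.inr 0) * Equiv.swap (Sum.inl 3) (Sum.inr 1)
  have h := hφ (exchange.trans ((ρ.sumCongr τ).trans f))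
  rw [frameSign_trans, frameSign_trans] at h
  rw [mul_left_comm ((frameSign f : ℤ) : R)]
  rcases Int.units_eq_one_or (Equiv.Perm.sign ρ) with hρ | hρ <;>
    simpa [exchange, Equiv.swap_apply_def, hρ, mul_assoc, neg_eq_iff_eq_neg] using h

lemma isSelfDual_of_strictMono (hσ : IsFourForm σ)
    (h : ∀ f : Fin 4 ⊕ Fin 4 ≃ Fin 8, StrictMono (f ∘ Sum.inl) → StrictMono (f ∘ Sum.inr) →
      σ (f (.inl 0)) (f (.inl 1)) (f (.inl 2)) (f (.inl 3)) =
        ((frameSign f : ℤ) : R) * σ (f (.inr 0)) (f (.inr 1)) (f (.inr 2)) (f (.inr 3))) :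
    IsSelfDual σ := by
  intro f
  let ρ := Tuple.sort (f ∘ Sum.inl)
  let τ := Tuple.sort (f ∘ Sum.inr)
  have hsorted := h ((ρ.sumCongr τ).trans f)
    ((Tuple.monotone_sort (f ∘ Sum.inl)).strictMono_of_injective
      ((f.injective.comp Sum.inl_injective).comp ρ.injective))
    ((Tuple.monotone_sort (f ∘ Sum.inr)).strictMono_of_injective
      ((f.injective.comp Sum.inr_injective).comp τ.injective))
  have hρ := hσ.apply_perm (f ∘ Sum.inl) ρ
  have hτ := hσ.apply_perm (f ∘ Sum.inr) τ
  rw [frameSign_trans, Equiv.Perm.sign_sumCongr] at hsorted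
  simp only [Equiv.trans_apply, Equiv.sumCongr_apply, Sum.map_inl, Sum.map_inr,
    Function.comp_apply] at hsorted hρ hτ
  rw [hρ, hτ] at hsorted
  rcases Int.units_eq_one_or (Equiv.Perm.sign ρ) with h₁ | h₁ <;>
  rcases Int.units_eq_one_or (Equiv.Perm.sign τ) with h₂ | h₂ <;>
    simpa [h₁, h₂] using hsorted

variable [IsAddTorsionFree R]

lemma two_mul_doubleContraction_frame (hφ : IsFourForm φ) (hσ : IsFourForm σ)
    (f : Fin 4 ⊕ Fin 4 ≃ Fin 8) (ρ : Equiv.Perm (Fin 4)) :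
    2 * doubleContraction φ σ (f (.inl (ρ 0))) (f (.inl (ρ 1))) (f (.inl (ρ 2))) (f (.inl (ρ 3))) =
      ∑ τ : Equiv.Perm (Fin 4),
        φ (f (.inl (ρ 0))) (f (.inl (ρ 1))) (f (.inr (τ 0))) (f (.inr (τ 1))) *
          σ (f (.inr (τ 0))) (f (.inr (τ 1))) (f (.inl (ρ 2))) (f (.inl (ρ 3))) := by
  have hleft (c : Fin 4) (b : Fin 8) :
      φ (f (.inl (ρ 0))) (f (.inl (ρ 1))) (f (.inl c)) b *
        σ (f (.inl c)) b (f (.inl (ρ 2))) (f (.inl (ρ 3))) = 0 := by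
    obtain ⟨a, rfl⟩ := ρ.surjective c
    refine hφ.mul_contracted_eq_zero hσ ?_
    fin_cases a <;> simp
  have hright (c : Fin 4) (b : Fin 8) :
      φ (f (.inl (ρ 0))) (f (.inl (ρ 1))) b (f (.inl c)) *
        σ b (f (.inl c)) (f (.inl (ρ 2))) (f (.inl (ρ 3))) = 0 := by
    rw [hφ.mul_contracted_comm hσ, hleft]
  have hinr := sum_perm_fin_four_eq_two_nsmul
    (fun a b ↦ φ (f (.inl (ρ 0))) (f (.inl (ρ 1))) (f (.inr a)) (f (.inr b)) *
      σ (f (.inr a)) (f (.inr b)) (f (.inl (ρ 2))) (f (.inl (ρ 3))))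
    (fun a ↦ hφ.mul_contracted_eq_zero hσ (by simp))
  rw [hinr, doubleContraction, ← Equiv.sum_comp f]
  simp only [← Equiv.sum_comp f (fun b ↦ φ _ _ _ b * σ _ b _ _), Fintype.sum_sum_type,
    hleft, hright, Finset.sum_const_zero, zero_add, nsmul_eq_mul, Nat.cast_ofNat]

lemma two_mul_antisymmetrize_doubleContraction_frame (hφ : IsFourForm φ) (hσ : IsFourForm σ)
    (f : Fin 4 ⊕ Fin 4 ≃ Fin 8) :
    2 * antisymmetrize (doubleContraction φ σ) (fun r ↦ f (.inl r)) =
      ∑ ρ : Equiv.Perm (Fin 4), ∑ τ : Equiv.Perm (Fin 4), ((Equiv.Perm.sign ρ : ℤ) : R) *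
        (φ (f (.inl (ρ 0))) (f (.inl (ρ 1))) (f (.inr (τ 0))) (f (.inr (τ 1))) *
          σ (f (.inr (τ 0))) (f (.inr (τ 1))) (f (.inl (ρ 2))) (f (.inl (ρ 3)))) := by
  rw [antisymmetrize, Finset.mul_sum]
  refine Finset.sum_congr rfl fun ρ _ ↦ ?_
  rw [mul_left_comm, two_mul_doubleContraction_frame hφ hσ, Finset.mul_sum]

theorem IsSelfDual.antisymmetrize_doubleContraction (hφ₄ : IsFourForm φ) (hφ : IsSelfDual φ)
    (hσ : IsFourForm σ) (f : Fin 4 ⊕ Fin 4 ≃ Fin 8) :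
    antisymmetrize (doubleContraction φ σ) (fun r ↦ f (.inl r)) =
      ((frameSign f : ℤ) : R) *
        antisymmetrize (doubleContraction φ σ) (fun r ↦ f (.inr r)) := by
  let pairSwap : Equiv.Perm (Fin 4) := Equiv.swap 0 2 * Equiv.swap 1 3
  have hx := two_mul_antisymmetrize_doubleContraction_frame hφ₄ hσ f
  have hy : 2 * antisymmetrize (doubleContraction φ σ) (fun r ↦ f (.inr r)) =
      ∑ ρ : Equiv.Perm (Fin 4), ∑ τ : Equiv.Perm (Fin 4), ((Equiv.Perm.sign τ : ℤ) : R) *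
        (φ (f (.inr (τ 2))) (f (.inr (τ 3))) (f (.inl (ρ 2))) (f (.inl (ρ 3))) *
          σ (f (.inl (ρ 2))) (f (.inl (ρ 3))) (f (.inr (τ 0))) (f (.inr (τ 1)))) := by
    have h := two_mul_antisymmetrize_doubleContraction_frame hφ₄ hσ ((Equiv.sumComm _ _).trans f)
    simp only [Equiv.trans_apply, Equiv.sumComm_apply, Sum.swap_inl, Sum.swap_inr] at h
    rw [h, Finset.sum_comm]
    refine (Fintype.sum_equiv (Equiv.mulRight pairSwap) _ _ fun ρ ↦
      Fintype.sum_equiv (Equiv.mulRight pairSwap) _ _ fun τ ↦ ?_).symm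
    simp [pairSwap, Equiv.swap_apply_def]
  apply nsmul_right_injective (two_ne_zero : (2 : ℕ) ≠ 0)
  simp only [nsmul_eq_mul, Nat.cast_ofNat]
  rw [hx, mul_left_comm, hy, Finset.mul_sum]
  refine Finset.sum_congr rfl fun ρ _ ↦ ?_
  rw [Finset.mul_sum]
  refine Finset.sum_congr rfl fun τ _ ↦ ?_
  rw [← mul_assoc, hφ.apply_swap f, hφ₄.swap_pairs, hσ.swap_pairs, mul_assoc, mul_assoc]

end SelfDuality

section GeneralizedDelta

variable {n : ℕ}

/-- The generalized Kronecker delta `δ^{u₀ … uₙ₋₁}_{v₀ … vₙ₋₁}`. -/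
def generalizedDelta (u v : Fin n → Fin 8) : ℝ :=
  (Matrix.of fun r s ↦ kd (u r) (v s)).det

lemma kd_comm (a b : Fin 8) : kd a b = kd b a := by
  simp only [kd, eq_comm]

lemma generalizedDelta_comm (u v : Fin n → Fin 8) :
    generalizedDelta u v = generalizedDelta v u := by
  rw [generalizedDelta, ← Matrix.det_transpose]
  simp only [generalizedDelta, Matrix.transpose, Matrix.of_apply, kd_comm]

lemma isAlternatingTensor_generalizedDelta (u : Fin n → Fin 8) :
    IsAlternatingTensor (generalizedDelta u) := by
  intro v τ
  rw [Units.smul_def, zsmul_eq_mul]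
  exact Matrix.det_permute' τ (Matrix.of fun r s ↦ kd (u r) (v s))

lemma generalizedDelta_of_strictMono {u v : Fin n → Fin 8} (hu : StrictMono u)
    (hv : StrictMono v) : generalizedDelta u v = if u = v then 1 else 0 := by
  split_ifs with huv
  · subst huv
    have hone : (Matrix.of fun r s ↦ kd (u r) (u s)) = 1 := by
      ext r s
      simp [kd, Matrix.one_apply, hu.injective.eq_iff]
    rw [generalizedDelta, hone, Matrix.det_one]
  · have hrange : ¬ Set.range u ⊆ Set.range v := fun hsub ↦
      huv ((hu.range_inj hv).mp (Set.eq_of_subset_of_ncard_le hsub (by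
        simp [← Set.image_univ, Set.ncard_image_of_injective, hu.injective, hv.injective])))
    obtain ⟨_, ⟨r, rfl⟩, hr⟩ := Set.not_subset.mp hrange
    exact Matrix.det_eq_zero_of_row_eq_zero r fun s ↦ if_neg fun h ↦ hr ⟨s, h.symm⟩

lemma sum_mul_generalizedDelta {F : (Fin n → Fin 8) → ℝ} (hF : IsAlternatingTensor F)
    (u : Fin n → Fin 8) : ∑ v, F v * generalizedDelta u v = n.factorial * F u := by
  have hprod (v : Fin n → Fin 8) (τ : Equiv.Perm (Fin n)) :
      ∏ r, kd (u (τ r)) (v r) = if u ∘ τ = v then 1 else 0 := by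
    simp [kd, Finset.prod_ite_zero, funext_iff]
  have hterm (τ : Equiv.Perm (Fin n)) :
      ∑ v, F v * (Equiv.Perm.sign τ • ∏ r, kd (u (τ r)) (v r)) = F u := by
    simp_rw [hprod, mul_smul_comm, mul_ite, mul_one, mul_zero, smul_ite, smul_zero]
    rw [Finset.sum_ite_eq, if_pos (Finset.mem_univ _), hF, smul_smul, Int.units_mul_self, one_smul]
  simp only [generalizedDelta, Matrix.det_apply, Matrix.of_apply, Finset.mul_sum]
  rw [Finset.sum_comm]
  simp only [hterm, Finset.sum_const, Finset.card_univ, Fintype.card_perm, Fintype.card_fin,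
    nsmul_eq_mul]

lemma wedge4_eq_generalizedDelta (a b c d : Fin 8) (v : Fin 4 → Fin 8) :
    wedge4 a b c d (v 0) (v 1) (v 2) (v 3) = generalizedDelta ![a, b, c, d] v := by
  rw [wedge4, generalizedDelta]
  congr 1
  ext r s
  fin_cases r <;> fin_cases s <;> rfl

end GeneralizedDelta

section Phi

/-- An integer model of `Phi` that can be evaluated: the set `{i, j, k, l}` selects the coefficient,
and the order of the four indices the sign. The set is encoded by a decimal numeral in which the
digit of `10 ^ p` counts the occurrences of `p`. -/
def phiInt (i j k l : Fin 8) : ℤ :=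
  let sgn (a b : Fin 8) : ℤ := if a < b then 1 else -1
  let orderSign : ℤ := sgn i j * sgn i k * sgn i l * sgn j k * sgn j l * sgn k l
  match 10 ^ i.val + 10 ^ j.val + 10 ^ k.val + 10 ^ l.val with
  | 01001101 | 01010011 | 00110101 | 11010100 => orderSign
  | 10000111 | 10011001 | 11100001 | 00101011 | 01111000 | 10110010 | 01100110
  | 00011110 | 10101100 | 11001010 => -orderSign
  | _ => 0

lemma isFourForm_phiInt : IsFourForm phiInt :=
  isFourForm_of_adjacent_swaps (by decide +kernel)

lemma isFourForm_Phi : IsFourForm Phi := by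
  have hwedge (a b c d : Fin 8) (v : Fin 4 → Fin 8) (τ : Equiv.Perm (Fin 4)) :
      wedge4 a b c d (v (τ 0)) (v (τ 1)) (v (τ 2)) (v (τ 3)) =
        Equiv.Perm.sign τ • wedge4 a b c d (v 0) (v 1) (v 2) (v 3) := by
    rw [wedge4_eq_generalizedDelta, ← isAlternatingTensor_generalizedDelta]
    exact wedge4_eq_generalizedDelta a b c d (v ∘ τ)
  intro v τ
  simp only [Phi, Function.comp_apply, hwedge, smul_add, smul_sub, smul_neg]

lemma Phi_eq_phiInt_of_lt {i j k l : Fin 8} (hij : i < j) (hjk : j < k) (hkl : k < l) :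
    Phi i j k l = phiInt i j k l := by
  have hblock (a b c d : Fin 8) (h : a < b ∧ b < c ∧ c < d) :
      wedge4 a b c d i j k l =
        ((if a = i ∧ b = j ∧ c = k ∧ d = l then 1 else 0 : ℤ) : ℝ) := by
    refine (wedge4_eq_generalizedDelta a b c d ![i, j, k, l]).trans ?_
    rw [generalizedDelta_of_strictMono]
    · simp
    · simp [Fin.strictMono_iff_lt_succ, Fin.forall_fin_succ, h]
    · simp [Fin.strictMono_iff_lt_succ, Fin.forall_fin_succ, hij, hjk, hkl]
  simp (disch := decide) only [Phi, hblock, ← Int.cast_neg, ← Int.cast_add, ← Int.cast_sub]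
  clear hblock
  rw [Int.cast_inj]
  revert i j k l
  decide +kernel

lemma Phi_eq_phiInt (i j k l : Fin 8) : Phi i j k l = phiInt i j k l :=
  congrFun (IsAlternatingTensor.eq_of_forall_strictMono isFourForm_Phi isFourForm_phiInt.intCast
    fun v hv ↦ Phi_eq_phiInt_of_lt (hv (by decide)) (hv (by decide)) (hv (by decide)))
    ![i, j, k, l]

open Finset in
lemma phiInt_eq_sign_mul_phiInt_compl :
    ∀ i j, i < j → ∀ k, j < k → ∀ l, k < l → ∀ a, a ∉ [i, j, k, l] →
    ∀ b, a < b → b ∉ [i, j, k, l] → ∀ c, b < c → ∀ d, c < d →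
    (c ∉ [i, j, k, l] ∧ d ∉ [i, j, k, l]) →
      phiInt i j k l =
        (∏ x, ∏ y ∈ Ioi x,
          if ![i, j, k, l, a, b, c, d] x < ![i, j, k, l, a, b, c, d] y then 1 else -1) *
        phiInt a b c d := by
  decide +kernel

lemma frameSign_eq_prod (f : Fin 4 ⊕ Fin 4 ≃ Fin 8) {v : Fin 8 → Fin 8}
    (hv : v = ![f (.inl 0), f (.inl 1), f (.inl 2), f (.inl 3),
      f (.inr 0), f (.inr 1), f (.inr 2), f (.inr 3)]) :
    (frameSign f : ℤ) = ∏ x, ∏ y ∈ Finset.Ioi x, if v x < v y then 1 else -1 := by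
  have hframe : ⇑(finSumFinEquiv.symm.trans f) = v := by
    subst hv
    ext x
    fin_cases x <;> rfl
  simp only [frameSign, Equiv.Perm.sign_eq_prod_prod_Ioi, hframe, Units.coe_prod]
  refine Finset.prod_congr rfl fun x _ ↦ Finset.prod_congr rfl fun y _ ↦ ?_
  split_ifs <;> rfl

theorem isSelfDual_Phi : IsSelfDual Phi := by
  refine isSelfDual_of_strictMono isFourForm_Phi fun f hl hr ↦ ?_
  have hdual := phiInt_eq_sign_mul_phiInt_compl
    _ _ (hl (show (0 : Fin 4) < 1 by decide)) _ (hl (show (1 : Fin 4) < 2 by decide))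
    _ (hl (show (2 : Fin 4) < 3 by decide)) _ (by simp)
    _ (hr (show (0 : Fin 4) < 1 by decide)) (by simp)
    _ (hr (show (1 : Fin 4) < 2 by decide)) _ (hr (show (2 : Fin 4) < 3 by decide)) (by simp)
  rw [Phi_eq_phiInt, Phi_eq_phiInt, frameSign_eq_prod f rfl, ← Int.cast_mul]
  exact congrArg Int.cast hdual

end Phi

section Contraction

lemma sum_phiInt_mul_phiInt :
    ∀ i j, i < j → ∀ k, j < k → ∀ a b, a < b → ∀ c, b < c →
      ∑ p, phiInt p i j k * phiInt p a b c =
        (if i = a ∧ j = b ∧ k = c then 1 else 0)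
        - (if i = a then phiInt j k b c else 0) - (if i = b then phiInt j k c a else 0)
        - (if i = c then phiInt j k a b else 0) - (if j = a then phiInt k i b c else 0)
        - (if j = b then phiInt k i c a else 0) - (if j = c then phiInt k i a b else 0)
        - (if k = a then phiInt i j b c else 0) - (if k = b then phiInt i j c a else 0)
        - (if k = c then phiInt i j a b else 0) := by
  decide +kernel

/-- The right-hand side of the contraction identity
`Φ_{pijk} Φ_{pabc} = δ^{ijk}_{abc} - (δ_{ia} Φ_{jkbc} + cyclic permutations)`, where the cyclic
permutations of `ijk` and of `abc` are independent. -/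
def phiContraction (u v : Fin 3 → Fin 8) : ℝ :=
  generalizedDelta u v -
    ∑ r, ∑ s, kd (u r) (v s) * Phi (u (r + 1)) (u (r + 2)) (v (s + 1)) (v (s + 2))

lemma phiContraction_comm (u v : Fin 3 → Fin 8) : phiContraction u v = phiContraction v u := by
  rw [phiContraction, phiContraction, generalizedDelta_comm, Finset.sum_comm]
  refine congrArg _ (Finset.sum_congr rfl fun s _ ↦ Finset.sum_congr rfl fun r _ ↦ ?_)
  rw [kd_comm, isFourForm_Phi.swap_pairs]

lemma isAlternatingTensor_phiContraction (u : Fin 3 → Fin 8) :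
    IsAlternatingTensor (phiContraction u) := by
  refine isAlternatingTensor_of_adjacent_swaps fun v a ↦ ?_
  have hdelta : generalizedDelta u (v ∘ Equiv.swap a.castSucc a.succ) = -generalizedDelta u v := by
    rw [isAlternatingTensor_generalizedDelta, Equiv.Perm.sign_swap a.castSucc_lt_succ.ne,
      Units.neg_smul, one_smul]
  have hsum (x y z : Fin 8) :
      ∑ s, kd x ((v ∘ Equiv.swap a.castSucc a.succ) s) *
        Phi y z ((v ∘ Equiv.swap a.castSucc a.succ) (s + 1))
          ((v ∘ Equiv.swap a.castSucc a.succ) (s + 2)) =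
      -∑ s, kd x (v s) * Phi y z (v (s + 1)) (v (s + 2)) := by
    have h₀ := isFourForm_Phi.swap₂₃ y z (v 1) (v 2)
    have h₁ := isFourForm_Phi.swap₂₃ y z (v 2) (v 0)
    have h₂ := isFourForm_Phi.swap₂₃ y z (v 0) (v 1)
    rw [Fin.sum_univ_three, Fin.sum_univ_three]
    fin_cases a
    · simpa [Equiv.swap_apply_def, h₀, h₁, h₂] using by ring
    · simpa [Equiv.swap_apply_def, h₀, h₁, h₂] using by ring
  simp only [phiContraction, hdelta, hsum, Finset.sum_neg_distrib]
  ring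

lemma isAlternatingTensor_sum_Phi_mul_Phi (u : Fin 3 → Fin 8) :
    IsAlternatingTensor fun v : Fin 3 → Fin 8 ↦
      ∑ p, Phi p (u 0) (u 1) (u 2) * Phi p (v 0) (v 1) (v 2) := by
  intro v τ
  rw [Finset.smul_sum]
  refine Finset.sum_congr rfl fun p _ ↦ ?_
  rw [← mul_smul_comm]
  exact congrArg _ (isFourForm_Phi.isAlternatingTensor_apply p v τ)

lemma sum_Phi_mul_Phi_of_strictMono {u v : Fin 3 → Fin 8} (hu : StrictMono u)
    (hv : StrictMono v) :
    ∑ p, Phi p (u 0) (u 1) (u 2) * Phi p (v 0) (v 1) (v 2) = phiContraction u v := by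
  have h := sum_phiInt_mul_phiInt
    _ _ (hu (show (0 : Fin 3) < 1 by decide)) _ (hu (show (1 : Fin 3) < 2 by decide))
    _ _ (hv (show (0 : Fin 3) < 1 by decide)) _ (hv (show (1 : Fin 3) < 2 by decide))
  have huv : u = v ↔ u 0 = v 0 ∧ u 1 = v 1 ∧ u 2 = v 2 := by
    simp [funext_iff, Fin.forall_fin_succ]
  have hcast := congrArg (Int.cast : ℤ → ℝ) h
  push_cast at hcast
  simp only [Phi_eq_phiInt, phiContraction, generalizedDelta_of_strictMono hu hv, huv, hcast,
    Fin.sum_univ_three, kd, ite_mul, one_mul, zero_mul, Fin.reduceAdd, zero_add, sub_sub]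
  ring

theorem sum_Phi_mul_Phi (u v : Fin 3 → Fin 8) :
    ∑ p, Phi p (u 0) (u 1) (u 2) * Phi p (v 0) (v 1) (v 2) = phiContraction u v := by
  have hmono {w : Fin 3 → Fin 8} (hw : StrictMono w) (x : Fin 3 → Fin 8) :
      ∑ p, Phi p (w 0) (w 1) (w 2) * Phi p (x 0) (x 1) (x 2) = phiContraction w x :=
    congrFun (IsAlternatingTensor.eq_of_forall_strictMono (isAlternatingTensor_sum_Phi_mul_Phi w)
      (isAlternatingTensor_phiContraction w) fun _ hx ↦ sum_Phi_mul_Phi_of_strictMono hw hx) x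
  refine congrFun (IsAlternatingTensor.eq_of_forall_strictMono
    (isAlternatingTensor_sum_Phi_mul_Phi u) (isAlternatingTensor_phiContraction u)
    fun w hw ↦ ?_) v
  simp only [phiContraction_comm u, ← hmono hw, mul_comm]

end Contraction

section TraceIdentity

lemma sum_fin_three_tuple {ι M : Type*} [Fintype ι] [AddCommMonoid M] (F : (Fin 3 → ι) → M) :
    ∑ v, F v = ∑ a, ∑ b, ∑ c, F ![a, b, c] := by
  simp only [← (Fin.consEquiv fun _ ↦ ι).sum_comp, Fintype.sum_prod_type]
  simp only [Fin.consEquiv, Equiv.coe_fn_mk, Finset.univ_unique, Finset.sum_singleton]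
  rfl

lemma sum_mul_sum_rotate {ι R : Type*} [Fintype ι] [CommRing R] {F : (Fin 3 → ι) → R}
    (hF : IsAlternatingTensor F) (g : ι → ι → ι → R) :
    ∑ v, F v * ∑ s, g (v s) (v (s + 1)) (v (s + 2)) =
      3 * ∑ v, F v * g (v 0) (v 1) (v 2) := by
  have hrotate (s : Fin 3) :
      ∑ v, F v * g (v s) (v (s + 1)) (v (s + 2)) = ∑ v, F v * g (v 0) (v 1) (v 2) := by
    have hsign : ∀ s : Fin 3, Equiv.Perm.sign (Equiv.addLeft s) = 1 := by decide
    refine Fintype.sum_equiv ((Equiv.addLeft s).symm.arrowCongr (Equiv.refl _)) _ _ fun v ↦ ?_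
    have h := hF v (Equiv.addLeft s)
    rw [hsign, one_smul] at h
    simp [← h, Equiv.arrowCongr, Function.comp_def]
  simp only [Finset.mul_sum]
  rw [Finset.sum_comm]
  simp [hrotate, Finset.mul_sum]

variable {σ : Fin 8 → Fin 8 → Fin 8 → Fin 8 → ℝ}

lemma IsFourForm.sum_mul_sum_kd (hσ : IsFourForm σ) (φ : Fin 8 → Fin 8 → Fin 8 → Fin 8 → ℝ)
    (i x y z : Fin 8) :
    ∑ v : Fin 3 → Fin 8, σ i (v 0) (v 1) (v 2) *
        ∑ s, kd x (v s) * φ y z (v (s + 1)) (v (s + 2)) =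
      3 * doubleContraction φ σ y z i x := by
  rw [sum_mul_sum_rotate (hσ.isAlternatingTensor_apply i) fun a b c ↦ kd x a * φ y z b c,
    sum_fin_three_tuple]
  simp only [Matrix.cons_val]
  simp only [kd, ite_mul, one_mul, zero_mul, mul_ite, mul_zero,
    Finset.sum_ite_irrel, Finset.sum_const_zero, Finset.sum_ite_eq, Finset.mem_univ, if_true,
    doubleContraction, hσ.swap_pairs i x]
  simp only [mul_comm]

theorem IsFourForm.sum_Phi_mul_trace (hσ : IsFourForm σ) (i j k l : Fin 8) :
    ∑ m, Phi m j k l * ∑ a, ∑ b, ∑ c, σ i a b c * Phi m a b c =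
      6 * σ i j k l - 3 * (doubleContraction Phi σ k l i j + doubleContraction Phi σ l j i k +
        doubleContraction Phi σ j k i l) := by
  calc ∑ m, Phi m j k l * ∑ a, ∑ b, ∑ c, σ i a b c * Phi m a b c
      = ∑ m, Phi m j k l * ∑ v : Fin 3 → Fin 8,
          σ i (v 0) (v 1) (v 2) * Phi m (v 0) (v 1) (v 2) := by
        simp only [sum_fin_three_tuple]
        rfl
    _ = ∑ v : Fin 3 → Fin 8, σ i (v 0) (v 1) (v 2) * phiContraction ![j, k, l] v := by
        simp only [← sum_Phi_mul_Phi, Finset.mul_sum]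
        rw [Finset.sum_comm]
        exact Finset.sum_congr rfl fun v _ ↦ Finset.sum_congr rfl fun m _ ↦ mul_left_comm _ _ _
    _ = 6 * σ i j k l - 3 * (doubleContraction Phi σ k l i j +
          doubleContraction Phi σ l j i k + doubleContraction Phi σ j k i l) := by
        have hshift : (1 : Fin 3) + 1 = 2 ∧ (1 : Fin 3) + 2 = 0 ∧ (2 : Fin 3) + 1 = 0 ∧
            (2 : Fin 3) + 2 = 1 := by decide
        simp only [phiContraction, Fin.sum_univ_three (fun r ↦ ∑ _, kd (![j, k, l] r) _ * _),
          mul_sub, mul_add, Finset.sum_sub_distrib, Finset.sum_add_distrib,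
          sum_mul_generalizedDelta (hσ.isAlternatingTensor_apply i), hσ.sum_mul_sum_kd,
          hshift, zero_add, Matrix.cons_val, Nat.factorial]
        push_cast
        ring

end TraceIdentity

section LeviCivita

variable {σ : Fin 8 → Fin 8 → Fin 8 → Fin 8 → ℝ}

open Function

lemma IsSelfDual.eps8_mul (hσ : IsSelfDual σ) (w : Fin 8 → Fin 8) :
    eps8 w * σ (w 4) (w 5) (w 6) (w 7) =
      if Injective w then σ (w 0) (w 1) (w 2) (w 3) else 0 := by
  by_cases hw : Bijective w
  · have h := hσ (finSumFinEquiv.trans (Equiv.ofBijective w hw))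
    have hsign : frameSign (finSumFinEquiv.trans (Equiv.ofBijective w hw)) =
        Equiv.Perm.sign (Equiv.ofBijective w hw) := by
      rw [frameSign, ← Equiv.trans_assoc, Equiv.symm_trans_self, Equiv.refl_trans]
    rw [hsign] at h
    rw [eps8, dif_pos hw, if_pos hw.injective]
    exact h.symm
  · rw [eps8, dif_neg hw, if_neg (Finite.injective_iff_bijective.not.mpr hw), zero_mul]

lemma sum_ite_injective_snoc {ι M : Type*} [Fintype ι] [DecidableEq ι] [AddCommMonoid M] {n : ℕ}
    (w : Fin n → ι) (y : M) :
    ∑ a, (if Injective (Fin.snoc w a : Fin (n + 1) → ι) then y else 0) =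
      if Injective w then (Fintype.card ι - n) • y else 0 := by
  have hcard (hw : Injective w) : Finset.card {a | a ∉ Set.range w} = Fintype.card ι - n := by
    have hcompl : ({a | a ∉ Set.range w} : Finset ι) = (Finset.univ.image w)ᶜ := by
      ext a
      simp
    rw [hcompl, Finset.card_compl, Finset.card_image_of_injective _ hw, Finset.card_fin]
  simp only [Fin.snoc_injective_iff, ite_and]
  split_ifs with hw
  · rw [← Finset.sum_filter, Finset.sum_const, hcard hw]
  · exact Finset.sum_const_zero

theorem IsSelfDual.sum_eps8_mul (hσ₄ : IsFourForm σ) (hσ : IsSelfDual σ) (i j k l : Fin 8) :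
    ∑ a, ∑ b, ∑ c, ∑ d, eps8 ![i, j, k, l, a, b, c, d] * σ a b c d = 24 * σ i j k l := by
  have hterm (a b c d : Fin 8) : eps8 ![i, j, k, l, a, b, c, d] * σ a b c d =
      if Injective (Fin.snoc (Fin.snoc (Fin.snoc (Fin.snoc ![i, j, k, l] a) b) c) d :
        Fin 8 → Fin 8) then σ i j k l else 0 := by
    have hvec : (Fin.snoc (Fin.snoc (Fin.snoc (Fin.snoc ![i, j, k, l] a) b) c) d :
        Fin 8 → Fin 8) = ![i, j, k, l, a, b, c, d] := by
      ext r
      fin_cases r <;> rfl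
    rw [hvec]
    exact hσ.eps8_mul ![i, j, k, l, a, b, c, d]
  simp only [hterm, sum_ite_injective_snoc]
  split_ifs with h
  · norm_num [← mul_assoc]
  · rw [hσ₄.eq_zero_of_not_injective h, mul_zero]

end LeviCivita

section TraceCondition

variable {σ : Fin 8 → Fin 8 → Fin 8 → Fin 8 → ℝ}

theorem IsFourForm.antisymmetrize_doubleContraction_of_trace_eq_zero (hσ : IsFourForm σ)
    (htrace : ∀ i j, ∑ a, ∑ b, ∑ c, σ j a b c * Phi i a b c = 0) (x : Fin 4 → Fin 8) :
    antisymmetrize (doubleContraction Phi σ) x = 16 * σ (x 0) (x 1) (x 2) (x 3) := by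
  have hcontract (i j k l : Fin 8) : 2 * σ i j k l = doubleContraction Phi σ k l i j +
      doubleContraction Phi σ l j i k + doubleContraction Phi σ j k i l := by
    have h := hσ.sum_Phi_mul_trace i j k l
    simp only [htrace, mul_zero, Finset.sum_const_zero] at h
    linarith
  have h := antisymmetrize_eq_three_mul hcontract x
  have hdouble : antisymmetrize (fun i j k l ↦ 2 * σ i j k l) x = 2 * antisymmetrize σ x := by
    simp only [antisymmetrize, Finset.mul_sum, mul_left_comm]
  rw [hdouble, hσ.antisymmetrize_eq] at h
  linarith

theorem IsFourForm.isSelfDual_of_trace_eq_zero (hσ : IsFourForm σ)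
    (htrace : ∀ i j, ∑ a, ∑ b, ∑ c, σ j a b c * Phi i a b c = 0) : IsSelfDual σ := by
  intro f
  have h := isSelfDual_Phi.antisymmetrize_doubleContraction isFourForm_Phi hσ f
  rw [hσ.antisymmetrize_doubleContraction_of_trace_eq_zero htrace,
    hσ.antisymmetrize_doubleContraction_of_trace_eq_zero htrace, mul_left_comm] at h
  exact mul_left_cancel₀ (by norm_num) h

end TraceCondition

/-- If a 4-form `σ` satisfies `σ_{jabc}Φ_{iabc} = 0` for all `i,j`, then `σ` is self-dual. -/
theorem spin7_traceless_four_form_self_dual :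
    ∀ σ : Fin 8 → Fin 8 → Fin 8 → Fin 8 → ℝ,
      (∀ i j k l, σ i j k l = -σ j i k l ∧ σ i j k l = -σ i k j l ∧ σ i j k l = -σ i j l k) →
      (∀ i j, (∑ a, ∑ b, ∑ c, σ j a b c * Phi i a b c) = 0) →
      ∀ i j k l, σ i j k l =
        (1/24) * ∑ a, ∑ b, ∑ c, ∑ d, eps8 ![i, j, k, l, a, b, c, d] * σ a b c d := by
  intro σ hswap htrace i j k l
  have hσ : IsFourForm σ := isFourForm_of_adjacent_swaps hswap
  have hdual : IsSelfDual σ := hσ.isSelfDual_of_trace_eq_zero htrace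
  rw [hdual.sum_eps8_mul hσ]
  ring
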